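/- In the presented group Γ = ⟨a, b, c | a³ = b³ = c³ = 1, (ab)² = ba, (ac)² = ca, (c⁻¹b)² = bc⁻¹⟩, the subgroup generated by the three elements a⁻¹b⁻¹, bc⁻¹ and ca is isomorphic to the presented group Λ = ⟨σ₁, σ₂, σ₃ | σ₁⁷ = σ₂⁷ = σ₃⁷ = 1, σ₁σ₂σ₃ = 1, σ₁³σ₂³σ₃³ = 1⟩. -/

import Mathlib

namespace Stmt12

/-- The relators of the Köhler–Meixner–Wester presentation
`Γ = ⟨a, b, c ∣ a³ = b³ = c³ = 1, (ab)² = ba, (ac)² = ca, (c⁻¹b)² = bc⁻¹⟩`,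
where the generators `a, b, c` correspond to `0, 1, 2 : Fin 3`. -/
def kmwRels : Set (FreeGroup (Fin 3)) :=
  { FreeGroup.of 0 ^ 3, FreeGroup.of 1 ^ 3, FreeGroup.of 2 ^ 3,
    (FreeGroup.of 0 * FreeGroup.of 1) ^ 2 * (FreeGroup.of 1 * FreeGroup.of 0)⁻¹,
    (FreeGroup.of 0 * FreeGroup.of 2) ^ 2 * (FreeGroup.of 2 * FreeGroup.of 0)⁻¹,
    ((FreeGroup.of 2)⁻¹ * FreeGroup.of 1) ^ 2 * (FreeGroup.of 1 * (FreeGroup.of 2)⁻¹)⁻¹ }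

/-- The Köhler–Meixner–Wester group
`Γ = ⟨a, b, c ∣ a³ = b³ = c³ = 1, (ab)² = ba, (ac)² = ca, (c⁻¹b)² = bc⁻¹⟩`. -/
def KMWGroup := PresentedGroup kmwRels

instance : Group KMWGroup := by unfold KMWGroup; infer_instance

/-- The generators `a`, `b`, `c` of the Köhler–Meixner–Wester group. -/
def a : KMWGroup := PresentedGroup.of 0
def b : KMWGroup := PresentedGroup.of 1
def c : KMWGroup := PresentedGroup.of 2

/-- The relators of the presentation
`Λ = ⟨σ₁, σ₂, σ₃ ∣ σ₁⁷ = σ₂⁷ = σ₃⁷ = 1, σ₁σ₂σ₃ = 1, σ₁³σ₂³σ₃³ = 1⟩`,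
where `σ₁, σ₂, σ₃` correspond to `0, 1, 2 : Fin 3`. -/
def lambdaRels : Set (FreeGroup (Fin 3)) :=
  { FreeGroup.of 0 ^ 7, FreeGroup.of 1 ^ 7, FreeGroup.of 2 ^ 7,
    FreeGroup.of 0 * FreeGroup.of 1 * FreeGroup.of 2,
    FreeGroup.of 0 ^ 3 * FreeGroup.of 1 ^ 3 * FreeGroup.of 2 ^ 3 }

/-- The panel-regular `Ã₂`-lattice
`Λ = ⟨σ₁, σ₂, σ₃ ∣ σ₁⁷ = σ₂⁷ = σ₃⁷ = 1, σ₁σ₂σ₃ = 1, σ₁³σ₂³σ₃³ = 1⟩`. -/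
def LambdaGroup := PresentedGroup lambdaRels

instance : Group LambdaGroup := by unfold LambdaGroup; infer_instance

theorem exists_lambda_hom {G : Type*} [Group G] (y : Fin 3 → G)
    (h0 : y 0 ^ 7 = 1) (h1 : y 1 ^ 7 = 1) (h2 : y 2 ^ 7 = 1)
    (h3 : y 0 * y 1 * y 2 = 1) (h4 : y 0 ^ 3 * y 1 ^ 3 * y 2 ^ 3 = 1) :
    ∃ f : LambdaGroup →* G, ∀ i, f (PresentedGroup.of i : PresentedGroup lambdaRels) = y i := by
  have h : ∀ r ∈ lambdaRels, FreeGroup.lift y r = 1 := by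
    intro r hr
    simp only [lambdaRels, Set.mem_insert_iff, Set.mem_singleton_iff] at hr
    rcases hr with rfl | rfl | rfl | rfl | rfl <;> simpa
  exact ⟨PresentedGroup.toGroup h, fun i => PresentedGroup.toGroup.of h⟩

theorem exists_kmw_hom {G : Type*} [Group G] (y : Fin 3 → G)
    (h0 : y 0 ^ 3 = 1) (h1 : y 1 ^ 3 = 1) (h2 : y 2 ^ 3 = 1)
    (h3 : (y 0 * y 1) ^ 2 = y 1 * y 0) (h4 : (y 0 * y 2) ^ 2 = y 2 * y 0)
    (h5 : ((y 2)⁻¹ * y 1) ^ 2 = y 1 * (y 2)⁻¹) :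
    ∃ f : KMWGroup →* G, f a = y 0 ∧ f b = y 1 ∧ f c = y 2 := by
  have h : ∀ r ∈ kmwRels, FreeGroup.lift y r = 1 := by
    intro r hr
    simp only [kmwRels, Set.mem_insert_iff, Set.mem_singleton_iff] at hr
    rcases hr with rfl | rfl | rfl | rfl | rfl | rfl
    · simpa
    · simpa
    · simpa
    · rw [map_mul, map_inv, mul_inv_eq_one]; simpa using h3
    · rw [map_mul, map_inv, mul_inv_eq_one]; simpa using h4
    · rw [map_mul, map_inv, mul_inv_eq_one]; simpa using h5
  exact ⟨PresentedGroup.toGroup h, PresentedGroup.toGroup.of h, PresentedGroup.toGroup.of h,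
    PresentedGroup.toGroup.of h⟩

theorem kmw_rel {r : FreeGroup (Fin 3)} (hr : r ∈ kmwRels) :
    (PresentedGroup.mk kmwRels r) = 1 := PresentedGroup.one_of_mem hr

theorem ra : a ^ 3 = 1 := kmw_rel (r := FreeGroup.of 0 ^ 3) (by simp [kmwRels])
theorem rb : b ^ 3 = 1 := kmw_rel (r := FreeGroup.of 1 ^ 3) (by simp [kmwRels])
theorem rc : c ^ 3 = 1 := kmw_rel (r := FreeGroup.of 2 ^ 3) (by simp [kmwRels])
theorem rab : (a * b) ^ 2 = b * a := mul_inv_eq_one.1 (kmw_rel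
  (r := (FreeGroup.of 0 * FreeGroup.of 1) ^ 2 * (FreeGroup.of 1 * FreeGroup.of 0)⁻¹)
  (by simp [kmwRels]))
theorem rac : (a * c) ^ 2 = c * a := mul_inv_eq_one.1 (kmw_rel
  (r := (FreeGroup.of 0 * FreeGroup.of 2) ^ 2 * (FreeGroup.of 2 * FreeGroup.of 0)⁻¹)
  (by simp [kmwRels]))
theorem rcb : (c⁻¹ * b) ^ 2 = b * c⁻¹ := mul_inv_eq_one.1 (kmw_rel
  (r := ((FreeGroup.of 2)⁻¹ * FreeGroup.of 1) ^ 2 * (FreeGroup.of 1 * (FreeGroup.of 2)⁻¹)⁻¹)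
  (by simp [kmwRels]))

def s (i : Fin 3) : LambdaGroup := (PresentedGroup.of i : PresentedGroup lambdaRels)

theorem lam_rel {r : FreeGroup (Fin 3)} (hr : r ∈ lambdaRels) :
    (PresentedGroup.mk lambdaRels r) = 1 := PresentedGroup.one_of_mem hr

theorem s0 : s 0 ^ 7 = 1 := lam_rel (r := FreeGroup.of 0 ^ 7) (by simp [lambdaRels])
theorem s1 : s 1 ^ 7 = 1 := lam_rel (r := FreeGroup.of 1 ^ 7) (by simp [lambdaRels])
theorem s2 : s 2 ^ 7 = 1 := lam_rel (r := FreeGroup.of 2 ^ 7) (by simp [lambdaRels])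
theorem s3 : s 0 * s 1 * s 2 = 1 :=
  lam_rel (r := FreeGroup.of 0 * FreeGroup.of 1 * FreeGroup.of 2) (by simp [lambdaRels])
theorem s4 : s 0 ^ 3 * s 1 ^ 3 * s 2 ^ 3 = 1 :=
  lam_rel (r := FreeGroup.of 0 ^ 3 * FreeGroup.of 1 ^ 3 * FreeGroup.of 2 ^ 3)
    (by simp [lambdaRels])

theorem lam_hom_ext {G : Type*} [Group G] {f g : LambdaGroup →* G}
    (h : ∀ i, f (s i) = g (s i)) : f = g :=
  PresentedGroup.ext (rels := lambdaRels) (φ := f) (ψ := g) h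

/-- In the Frobenius group relation: `x³ = 1`, `y³ = 1`, `(xy)² = yx` gives `(yx)⁴ = xy`. -/
theorem frob {G : Type*} [Group G] {x y : G} (hx : x ^ 3 = 1) (h : (x * y) ^ 2 = y * x) :
    (y * x) ^ 7 = 1 ∧ (y * x) ^ 4 = x * y := by
  -- `w = yx`, `x w x⁻¹ = xy`
  have e : x * (y * x) * x⁻¹ = x * y := by group
  set w := y * x with hw
  have h2 : x * w ^ 2 * x⁻¹ = w := by
    rw [← conj_pow, e, h]
  have k (n : ℕ) : x * w ^ (2 * n) * x⁻¹ = w ^ n := by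
    rw [pow_mul, ← conj_pow, h2]
  have h8 : w ^ 8 = w := by
    have e3 : x * (x * (x * w ^ 8 * x⁻¹) * x⁻¹) * x⁻¹ = w := by
      rw [k 4, k 2, h2]
    have e4 : x * (x * (x * w ^ 8 * x⁻¹) * x⁻¹) * x⁻¹ = x ^ 3 * w ^ 8 * (x ^ 3)⁻¹ := by
      rw [pow_succ x 2, pow_two x]; group
    rw [e4, hx] at e3
    simpa using e3
  have h7 : w ^ 7 = 1 := by
    have : w ^ 7 * w = 1 * w := by rw [← pow_succ, h8, one_mul]
    exact mul_right_cancel this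
  refine ⟨h7, ?_⟩
  rw [← k 4, show 2 * 4 = 8 from rfl, h8, e]

theorem inv_pow_four {G : Type*} [Group G] {w : G} (h : w ^ 7 = 1) : w ^ 3 = (w ^ 4)⁻¹ := by
  rw [eq_inv_iff_mul_eq_one, ← pow_add, h]

theorem exists_phi : ∃ f : LambdaGroup →* KMWGroup,
    f (s 0) = a⁻¹ * b⁻¹ ∧ f (s 1) = b * c⁻¹ ∧ f (s 2) = c * a := by
  obtain ⟨p7, p4⟩ := frob ra rab
  obtain ⟨q7, q4⟩ := frob ra rac
  obtain ⟨r7, r4⟩ := frob (x := c⁻¹) (by rw [inv_pow, rc, inv_one]) rcb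
  obtain ⟨f, hf⟩ := exists_lambda_hom ![a⁻¹ * b⁻¹, b * c⁻¹, c * a]
    (by simp only [Matrix.cons_val]; rw [← mul_inv_rev, inv_pow, p7, inv_one]) r7 q7
    (by simp only [Matrix.cons_val]; group)
    (by
      simp only [Matrix.cons_val]
      rw [← mul_inv_rev, inv_pow, inv_pow_four p7, inv_pow_four r7, inv_pow_four q7, p4, q4, r4]
      group)
  exact ⟨f, hf 0, hf 1, hf 2⟩

theorem s14 : s 0 ^ 4 * s 2 ^ 4 = s 1 ^ 3 := by
  have h := s4
  have h0 : s 0 ^ 4 = (s 0 ^ 3)⁻¹ := by rw [inv_pow_four s0, inv_inv]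
  have h2 : s 2 ^ 4 = (s 2 ^ 3)⁻¹ := by rw [inv_pow_four s2, inv_inv]
  rw [h0, h2, mul_inv_eq_iff_eq_mul, inv_eq_iff_mul_eq_one, ← mul_assoc, h]

theorem s20 : s 2 * s 0 = (s 1)⁻¹ := by
  have h := s3
  rw [eq_inv_iff_mul_eq_one, mul_assoc]
  rw [mul_eq_one_iff_eq_inv] at h
  rw [h, mul_inv_cancel]

theorem exists_alpha : ∃ f : LambdaGroup →* LambdaGroup,
    f (s 0) = s 0 ^ 4 ∧ f (s 1) = s 2 ^ 4 * s 1 ^ 4 * (s 2 ^ 4)⁻¹ ∧ f (s 2) = s 2 ^ 4 := by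
  have pw (i : Fin 3) (h : s i ^ 7 = 1) : (s i ^ 4) ^ 7 = 1 := by
    rw [← pow_mul, mul_comm, pow_mul, h, one_pow]
  have pw3 (i : Fin 3) (h : s i ^ 7 = 1) : (s i ^ 4) ^ 3 = s i ^ 5 := by
    rw [← pow_mul, show 4 * 3 = 7 + 5 from rfl, pow_add, h, one_mul]
  obtain ⟨f, hf⟩ := exists_lambda_hom ![s 0 ^ 4, s 2 ^ 4 * s 1 ^ 4 * (s 2 ^ 4)⁻¹, s 2 ^ 4]
    (pw 0 s0)
    (by simp only [Matrix.cons_val]; rw [conj_pow, pw 1 s1]; simp)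
    (pw 2 s2)
    (by
      simp only [Matrix.cons_val]
      rw [← mul_assoc, ← mul_assoc, s14, ← pow_add, inv_mul_cancel_right, s1])
    (by
      simp only [Matrix.cons_val]
      rw [conj_pow, pw3 0 s0, pw3 1 s1, pw3 2 s2]
      have e : s 0 ^ 5 * (s 2 ^ 4 * s 1 ^ 5 * (s 2 ^ 4)⁻¹) * s 2 ^ 5
          = (s 2)⁻¹ * ((s 2 * s 0) * (s 0 ^ 4 * s 2 ^ 4) * s 1 ^ 5) * s 2 := by group
      rw [e, s20, s14, mul_assoc (s 1)⁻¹, ← pow_add, show 3 + 5 = 7 + 1 from rfl, pow_add, s1]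
      group)
  exact ⟨f, hf 0, hf 1, hf 2⟩

theorem s1_eq : s 1 = (s 0)⁻¹ * (s 2)⁻¹ := by
  rw [← mul_inv_rev, s20, inv_inv]

theorem exists_aut : ∃ t : MulAut LambdaGroup, t ^ 3 = 1 ∧
    t (s 0) = s 0 ^ 4 ∧ t (s 2) = s 2 ^ 4 := by
  obtain ⟨f, h0, -, h2⟩ := exists_alpha
  have pw (i : Fin 3) (h : s i ^ 7 = 1) (hi : f (s i) = s i ^ 4) : f (f (f (s i))) = s i := by
    simp only [hi, map_pow]
    rw [← pow_mul, ← pow_mul, show 4 * 4 * 4 = 7 * 9 + 1 from rfl, pow_add, pow_mul, h]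
    simp
  have hid : f.comp (f.comp f) = MonoidHom.id _ := by
    apply lam_hom_ext
    intro i
    have p0 := pw 0 s0 h0
    have p2 := pw 2 s2 h2
    fin_cases i
    · exact p0
    · change f (f (f (s 1))) = s 1
      rw [s1_eq]
      simp only [map_mul, map_inv, p0, p2]
    · exact p2
  have hid' : ∀ x, f (f (f x)) = x := fun x => DFunLike.congr_fun hid x
  refine ⟨MonoidHom.toMulEquiv f (f.comp f) hid hid, ?_, h0, h2⟩
  ext x
  exact hid' x

theorem cube {G : Type*} [Group G] {x t : G} (h7 : x ^ 7 = 1) (ht : t ^ 3 = 1)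
    (h : t * x * t⁻¹ = x ^ 4) : (x * t⁻¹) ^ 3 = 1 := by
  have h2 : t * x ^ 2 * t⁻¹ = x := by
    rw [← conj_pow, h, ← pow_mul, show 4 * 2 = 7 + 1 from rfl, pow_add, h7]; simp
  have h4 : t⁻¹ * x * t = x ^ 2 := by
    nth_rewrite 1 [← h2]; group
  have h5 : t⁻¹ * x ^ 2 * t = x ^ 4 := by
    calc t⁻¹ * x ^ 2 * t = (t⁻¹ * x * t) * (t⁻¹ * x * t) := by rw [pow_two]; group
      _ = x ^ 4 := by rw [h4, ← pow_add]
  calc (x * t⁻¹) ^ 3 = x * (t⁻¹ * x * t) * (t⁻¹ * (t⁻¹ * x * t) * t) * (t ^ 3)⁻¹ := by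
        rw [pow_succ (x * t⁻¹), pow_two (x * t⁻¹)]; group
    _ = x ^ 7 := by rw [h4, h5, ht]; group
    _ = 1 := h7

theorem phi_injective (f : LambdaGroup →* KMWGroup)
    (f0 : f (s 0) = a⁻¹ * b⁻¹) (f2 : f (s 2) = c * a) : Function.Injective f := by
  obtain ⟨α, hα, α0, α2⟩ := exists_aut
  let ι : LambdaGroup →* LambdaGroup ⋊[MonoidHom.id (MulAut LambdaGroup)] MulAut LambdaGroup :=
    SemidirectProduct.inl
  have hι : Function.Injective ι := SemidirectProduct.inl_injective
  obtain ⟨t, ht, hc⟩ : ∃ t : LambdaGroup ⋊[MonoidHom.id (MulAut LambdaGroup)] MulAut LambdaGroup,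
      t ^ 3 = 1 ∧ ∀ x, t * ι x * t⁻¹ = ι (α x) := by
    refine ⟨SemidirectProduct.inr α, by rw [← map_pow, hα, map_one], fun x => ?_⟩
    rw [← map_inv]
    exact (SemidirectProduct.inl_aut (φ := MonoidHom.id (MulAut LambdaGroup)) α x).symm
  have c0 : t * ι (s 0) * t⁻¹ = ι (s 0) ^ 4 := by rw [hc, α0, map_pow]
  have c2 : t * ι (s 2) * t⁻¹ = ι (s 2) ^ 4 := by rw [hc, α2, map_pow]
  have e0 : ι (s 0) ^ 7 = 1 := by rw [← map_pow, s0, map_one]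
  have e1 : ι (s 1) ^ 7 = 1 := by rw [← map_pow, s1, map_one]
  have e2 : ι (s 2) ^ 7 = 1 := by rw [← map_pow, s2, map_one]
  have e14 : ι (s 0) ^ 4 * ι (s 2) ^ 4 = ι (s 1) ^ 3 := by
    simp only [← map_pow, ← map_mul, s14]
  have e1' : ι (s 1) = (ι (s 0))⁻¹ * (ι (s 2))⁻¹ := by rw [s1_eq]; simp
  have c0' : t * (ι (s 0))⁻¹ * t⁻¹ = ((ι (s 0)) ^ 4)⁻¹ := by rw [← c0]; group
  have p8 {G : Type _} [Group G] (x : G) (h : x ^ 7 = 1) : (x ^ 4) ^ 2 = x := by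
    rw [← pow_mul, show 4 * 2 = 7 + 1 from rfl, pow_add, h]; simp
  obtain ⟨g, ga, gb, gc⟩ := exists_kmw_hom ![t, (ι (s 0))⁻¹ * t⁻¹, ι (s 2) * t⁻¹]
    ht
    (cube (by rw [inv_pow, e0, inv_one]) ht (by rw [c0', inv_pow]))
    (cube e2 ht c2)
    (by
      simp only [Matrix.cons_val]
      rw [← mul_assoc, c0', inv_mul_cancel_right, inv_pow, p8 _ e0])
    (by
      simp only [Matrix.cons_val]
      rw [← mul_assoc, c2, inv_mul_cancel_right, p8 _ e2])
    (by
      simp only [Matrix.cons_val]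
      have l : (ι (s 2) * t⁻¹)⁻¹ * ((ι (s 0))⁻¹ * t⁻¹)
          = ((t * ι (s 0) * t⁻¹) * (t * ι (s 2) * t⁻¹))⁻¹ := by group
      have r : (ι (s 0))⁻¹ * t⁻¹ * (ι (s 2) * t⁻¹)⁻¹ = (ι (s 0))⁻¹ * (ι (s 2))⁻¹ := by group
      rw [l, r, c0, c2, e14, ← e1', inv_pow_four e1, inv_inv, p8 _ e1])
  simp only [Matrix.cons_val] at ga gb gc
  have q0 : g (f (s 0)) = ι (s 0) := by
    rw [f0, map_mul, map_inv, map_inv, ga, gb]; group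
  have q2 : g (f (s 2)) = ι (s 2) := by
    rw [f2, map_mul, ga, gc]; group
  have hcomp : g.comp f = ι := by
    apply lam_hom_ext
    intro i
    fin_cases i
    · exact q0
    · change g (f (s 1)) = ι (s 1)
      rw [s1_eq]
      simp only [map_mul, map_inv, q0, q2]
    · exact q2
  have : Function.Injective (g ∘ f) := by
    rw [← MonoidHom.coe_comp, hcomp]; exact hι
  exact this.of_comp

theorem lam_closure : Subgroup.closure (Set.range s) = ⊤ :=
  PresentedGroup.closure_range_of lambdaRels

/-- In the Köhler–Meixner–Wester group
`Γ = ⟨a, b, c ∣ a³ = b³ = c³ = 1, (ab)² = ba, (ac)² = ca, (c⁻¹b)² = bc⁻¹⟩`, the subgroup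
generated by the three elements `a⁻¹b⁻¹`, `bc⁻¹` and `ca` is isomorphic to the presented group
`Λ = ⟨σ₁, σ₂, σ₃ ∣ σ₁⁷ = σ₂⁷ = σ₃⁷ = 1, σ₁σ₂σ₃ = 1, σ₁³σ₂³σ₃³ = 1⟩`. -/
theorem statement12 :
    Nonempty
      (↥(Subgroup.closure ({a⁻¹ * b⁻¹, b * c⁻¹, c * a} : Set KMWGroup)) ≃* LambdaGroup) := by
  obtain ⟨f, f0, f1, f2⟩ := exists_phi
  have hr : f.range = Subgroup.closure ({a⁻¹ * b⁻¹, b * c⁻¹, c * a} : Set KMWGroup) := by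
    rw [MonoidHom.range_eq_map, ← lam_closure, MonoidHom.map_closure]
    congr 1
    ext x
    simp only [Set.mem_image, Set.mem_range, Fin.exists_fin_succ,
      Set.mem_insert_iff, Set.mem_singleton_iff]
    simp [f0, f1, f2, eq_comm]
  rw [← hr]
  exact ⟨(MonoidHom.ofInjective (phi_injective f f0 f2)).symm⟩

end Stmt12
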